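/- For every integer n ≥ 0, the number of Schröder paths of semilength n with no hills equals the total number of little Schröder paths of semilength n; that is, r(n,0) = Σ_{k=0}^{n} s(n,k). -/

import Mathlib

/-!
Exchanging every hill `UD` with a horizontal step at height `0` (and conversely) is an involution
of the Schröder paths of semilength `n`: a factor `UD` and a step `H` both leave the height
unchanged and both contribute `1` to the semilength. It interchanges the statistics `hills` and
`h0`, so it restricts to a bijection between hill-free Schröder paths and little Schröder paths.
The sum over `k` is then the partition of the finite set of little paths according to `hills`,
which is at most the number of `U`'s, hence at most `n`.

The involution `swap` is defined on all words, with an arbitrary integer starting height, so that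
its properties can be shown by induction on the word; `hillsFrom` and `h0From` are the
corresponding statistics.
-/

/-- A step of a Schröder path: up `(1,1)`, down `(1,-1)`, or horizontal `(2,0)`. -/
inductive SStep : Type
  | U | D | H
  deriving DecidableEq

/-- `IsSchroeder n w` : `w` is a Schröder path of semilength `n`. -/
def IsSchroeder (n : ℕ) (w : List SStep) : Prop :=
  w.count SStep.U = w.count SStep.D ∧
  w.count SStep.U + w.count SStep.H = n ∧
  ∀ i : ℕ, (w.take i).count SStep.D ≤ (w.take i).count SStep.U

/-- The number of hills: occurrences of the factor `UD` starting at height `0`. -/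
def hills (w : List SStep) : ℕ :=
  ((Finset.range w.length).filter (fun i =>
    w[i]? = some SStep.U ∧ w[i+1]? = some SStep.D ∧
    (w.take i).count SStep.U = (w.take i).count SStep.D)).card

/-- The number of horizontal steps at height `0`. -/
def h0 (w : List SStep) : ℕ :=
  ((Finset.range w.length).filter (fun i =>
    w[i]? = some SStep.H ∧
    (w.take i).count SStep.U = (w.take i).count SStep.D)).card

/-- The number of horizontal steps at positive height. -/
def hpos (w : List SStep) : ℕ :=
  ((Finset.range w.length).filter (fun i =>
    w[i]? = some SStep.H ∧
    (w.take i).count SStep.D < (w.take i).count SStep.U)).card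

/-- `r n k` : the number of Schröder paths of semilength `n` with exactly `k` hills. -/
noncomputable def r (n k : ℕ) : ℕ :=
  Nat.card {w : List SStep // IsSchroeder n w ∧ hills w = k}

/-- A little Schröder path: a Schröder path with no horizontal step at height `0`. -/
def IsLittle (n : ℕ) (w : List SStep) : Prop :=
  IsSchroeder n w ∧ h0 w = 0

/-- `s n k` : the number of little Schröder paths of semilength `n` with exactly `k` hills. -/
noncomputable def s (n k : ℕ) : ℕ :=
  Nat.card {w : List SStep // IsLittle n w ∧ hills w = k}

/-- The change of height along a step. -/
def rise : SStep → ℤ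
  | .U => 1
  | .D => -1
  | .H => 0

/-- The number of hills (factors `UD` starting at height `0`) of a word read from height `h`. -/
def hillsFrom : ℤ → List SStep → ℕ
  | _, [] => 0
  | h, x :: w => hillsFrom (h + rise x) w +
      if x = .U ∧ w.head? = some .D ∧ h = 0 then 1 else 0

/-- The number of horizontal steps at height `0` of a word read from height `h`. -/
def h0From : ℤ → List SStep → ℕ
  | _, [] => 0
  | h, x :: w => h0From (h + rise x) w + if x = .H ∧ h = 0 then 1 else 0

/-- The word `w`, read from height `h`, stays weakly above height `0`. -/
def StaysNonneg : ℤ → List SStep → Prop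
  | h, [] => 0 ≤ h
  | h, x :: w => 0 ≤ h ∧ StaysNonneg (h + rise x) w

/-- Exchange hills with horizontal steps at height `0` in a word read from height `h`.
A factor `UD` off the axis is copied in one go, which amounts to copying its two steps. -/
def swap : ℤ → List SStep → List SStep
  | _, [] => []
  | h, .D :: w => .D :: swap (h - 1) w
  | h, .H :: w => if h = 0 then .U :: .D :: swap h w else .H :: swap h w
  | _, [.U] => [.U]
  | h, .U :: .D :: w => if h = 0 then .H :: swap h w else .U :: .D :: swap h w
  | h, .U :: .U :: w => .U :: swap (h + 1) (.U :: w)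
  | h, .U :: .H :: w => .U :: swap (h + 1) (.H :: w)

theorem swap_U (h : ℤ) (v : List SStep) (hv : ¬ (h = 0 ∧ v.head? = some .D)) :
    swap h (.U :: v) = .U :: swap (h + 1) v := by
  rcases v with _ | ⟨_ | _ | _, v⟩ <;> simp_all [swap]

theorem swap_head (h : ℤ) (v : List SStep) (hv : v.head? ≠ some .D) :
    (swap h v).head? ≠ some .D := by
  rcases v with _ | ⟨_ | _ | _, _ | ⟨_ | _ | _, v⟩⟩ <;> simp_all [swap] <;> split_ifs <;> simp

theorem swap_swap (h : ℤ) (w : List SStep) : swap h (swap h w) = w := by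
  induction h, w using swap.induct with
  | case8 h w ih =>
    rw [swap, swap_U _ _ (fun H => swap_head _ _ (by simp) H.2), ih]
  | case9 h w ih =>
    rw [swap, swap_U _ _ (fun H => swap_head _ _ (by simp) H.2), ih]
  | _ => simp_all [swap]

theorem hillsFrom_swap (h : ℤ) (w : List SStep) : hillsFrom h (swap h w) = h0From h w := by
  induction h, w using swap.induct with
  | case8 h w ih =>
    have := swap_head (h + 1) (.U :: w) (by simp)
    rw [swap, hillsFrom, h0From]
    simp_all [rise]
  | case9 h w ih =>
    have := swap_head (h + 1) (.H :: w) (by simp)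
    rw [swap, hillsFrom, h0From]
    simp_all [rise]
  | _ => simp_all [swap, hillsFrom, h0From, rise, sub_eq_add_neg]

theorem count_swap (h : ℤ) (w : List SStep) :
    ((swap h w).count .U : ℤ) - (swap h w).count .D = w.count .U - w.count .D ∧
    (swap h w).count .U + (swap h w).count .H = w.count .U + w.count .H := by
  induction h, w using swap.induct <;> simp_all [swap] <;> omega

theorem staysNonneg_swap (h : ℤ) (w : List SStep) (hw : StaysNonneg h w) :
    StaysNonneg h (swap h w) := by
  induction h, w using swap.induct <;> simp_all [swap, StaysNonneg, rise, sub_eq_add_neg]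

/-- The indexed count of positions underlying both `hills` and `h0`, one letter at a time. -/
theorem card_filter_cons (x : SStep) (w : List SStep) (P : ℕ → Prop) [DecidablePred P] :
    ((Finset.range (x :: w).length).filter P).card =
      ((Finset.range w.length).filter (fun i => P (i + 1))).card + if P 0 then 1 else 0 := by
  rw [Finset.card_filter, Finset.card_filter, List.length_cons, Finset.sum_range_succ']

theorem height_cons (h : ℤ) (x : SStep) (l : List SStep) :
    h + (x :: l).count .U - (x :: l).count .D =
      h + rise x + l.count .U - l.count .D := by
  cases x <;> simp [rise] <;> ring

theorem hillsFrom_eq (h : ℤ) (w : List SStep) :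
    hillsFrom h w = ((Finset.range w.length).filter (fun i =>
      w[i]? = some .U ∧ w[i+1]? = some .D ∧
      h + (w.take i).count .U - (w.take i).count .D = 0)).card := by
  induction w generalizing h with
  | nil => simp [hillsFrom]
  | cons x w ih =>
    rw [card_filter_cons, hillsFrom, ih]
    simp only [List.take_succ_cons, height_cons, List.getElem?_cons_succ]
    simp [List.head?_eq_getElem?]

theorem h0From_eq (h : ℤ) (w : List SStep) :
    h0From h w = ((Finset.range w.length).filter (fun i =>
      w[i]? = some .H ∧
      h + (w.take i).count .U - (w.take i).count .D = 0)).card := by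
  induction w generalizing h with
  | nil => simp [h0From]
  | cons x w ih =>
    rw [card_filter_cons, h0From, ih]
    simp only [List.take_succ_cons, height_cons, List.getElem?_cons_succ]
    simp

theorem staysNonneg_iff (h : ℤ) (w : List SStep) :
    StaysNonneg h w ↔ ∀ i, 0 ≤ h + (w.take i).count .U - (w.take i).count .D := by
  induction w generalizing h with
  | nil => simp [StaysNonneg]
  | cons x w ih =>
    rw [StaysNonneg, ih]
    constructor
    · rintro ⟨h1, h2⟩ (_ | i)
      · simpa using h1
      · rw [List.take_succ_cons, height_cons]; exact h2 i
    · intro H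
      refine ⟨by simpa using H 0, fun i => ?_⟩
      have := H (i + 1)
      rwa [List.take_succ_cons, height_cons] at this

theorem hills_eq (w : List SStep) : hills w = hillsFrom 0 w := by
  rw [hillsFrom_eq, hills]
  congr! 5
  omega

theorem h0_eq (w : List SStep) : h0 w = h0From 0 w := by
  rw [h0From_eq, h0]
  congr! 4
  omega

theorem isSchroeder_swap {n : ℕ} {w : List SStep} (hw : IsSchroeder n w) :
    IsSchroeder n (swap 0 w) := by
  obtain ⟨h1, h2, h3⟩ := hw
  obtain ⟨c1, c2⟩ := count_swap 0 w
  have h4 : StaysNonneg 0 w := (staysNonneg_iff 0 w).2 fun i => by have := h3 i; omega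
  have h5 := (staysNonneg_iff 0 _).1 (staysNonneg_swap 0 w h4)
  exact ⟨by omega, by omega, fun i => by have := h5 i; omega⟩

theorem hills_swap (w : List SStep) : hills (swap 0 w) = h0 w := by
  rw [hills_eq, h0_eq, hillsFrom_swap]

theorem h0_swap (w : List SStep) : h0 (swap 0 w) = hills w := by
  rw [← hills_swap, swap_swap]

/-- `swap 0` matches hill-free Schröder paths with little Schröder paths. -/
def hillFreeEquivLittle (n : ℕ) :
    {w : List SStep // IsSchroeder n w ∧ hills w = 0} ≃ {w : List SStep // IsLittle n w} where
  toFun w := ⟨swap 0 w.1, isSchroeder_swap w.2.1, by rw [h0_swap, w.2.2]⟩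
  invFun w := ⟨swap 0 w.1, isSchroeder_swap w.2.1, by rw [hills_swap, w.2.2]⟩
  left_inv w := Subtype.ext (swap_swap 0 w.1)
  right_inv w := Subtype.ext (swap_swap 0 w.1)

theorem hillsFrom_le (h : ℤ) (w : List SStep) : hillsFrom h w ≤ w.count .U := by
  induction w generalizing h with
  | nil => simp [hillsFrom]
  | cons x w ih =>
    have := ih (h + rise x)
    rw [hillsFrom, List.count_cons]
    cases x <;> simp <;> (try split_ifs) <;> omega

theorem length_eq_counts (w : List SStep) :
    w.length = w.count .U + w.count .D + w.count .H := by
  induction w with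
  | nil => rfl
  | cons x w ih => cases x <;> simp <;> omega

theorem finite_isLittle (n : ℕ) : {w : List SStep | IsLittle n w}.Finite := by
  have : Finite SStep :=
    Set.finite_univ_iff.1 (Set.Finite.subset (Set.toFinite {SStep.U, SStep.D, SStep.H})
      (by rintro (_ | _ | _) - <;> simp))
  refine (List.finite_length_le SStep (2 * n)).subset ?_
  rintro w ⟨⟨h1, h2, -⟩, -⟩
  have := length_eq_counts w
  simp only [Set.mem_ofPred_eq]
  omega

/-- For every `n ≥ 0`, the number of hill-free Schröder paths of semilength `n`
equals the total number of little Schröder paths of semilength `n`: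
`r(n,0) = Σ_{k=0}^{n} s(n,k)`. -/
theorem stmt4 (n : ℕ) :
    r n 0 = ∑ k ∈ Finset.range (n + 1), s n k := by
  have hr : r n 0 = (finite_isLittle n).toFinset.card := by
    rw [r, Nat.card_congr (hillFreeEquivLittle n),
      ← Set.ncard_eq_toFinset_card _ (finite_isLittle n)]
    rfl
  have hs (k : ℕ) : s n k = ((finite_isLittle n).toFinset.filter (fun w => hills w = k)).card := by
    rw [s, ← Set.ncard_coe_finset]
    simp only [Finset.coe_filter, Set.Finite.mem_toFinset, Set.mem_ofPred_eq]
    rfl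
  simp only [hr, hs]
  refine Finset.card_eq_sum_card_fiberwise fun w hw => ?_
  have hw' : IsLittle n w := by simpa using hw
  have h1 := hillsFrom_le 0 w
  have h2 := hw'.1.2.1
  rw [← hills_eq] at h1
  simp only [Finset.coe_range, Set.mem_Iio]
  omega
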